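/- Assume f is continuous and satisfies the Lipschitz condition (A₂) with constant w > 0. Let x, y : [0,1] → ℝ be continuously differentiable with x(0) = y(0) = 0 and x(1) = y(1) = 0. Then Zx and Zy are differentiable on [0,1] and for every t ∈ [0,1], |(Zx)'(t) − (Zy)'(t)| ≤ ψ₂·‖x − y‖, where (Zx)(t) = ∫₀¹ G(t,s)·f(s, x(s), x'(s)) ds + ∫₀¹ H(t,s)·x(s) ds and similarly for Zy. -/

import Mathlib

/-!
The operator `Z` is linear in the pair `(F, d)`, where `F s = f s (x s) (x' s)` and `d = x`, so
`Zx - Zy` is `Z` applied to the differences, and it suffices to differentiate `Z (F, d)` and to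
bound its derivative by `sup |F|`, `sup |d|` and `sup |d'|` for `F` continuous and `d` of class
`C¹` with `d 0 = d 1 = 0` (`exists_hasDerivWithinAt_operator`); derivatives within `[0,1]` being
unique, the bound transfers to `(Zx)' - (Zy)'`.

Three kinds of terms occur.
* The truncated kernel `(t - s)₊ ^ p` with `p > 1` is `C¹` in `t`, and one differentiates under
  the integral sign (`hasDerivAt_integral_truncated_rpow`).
* The truncated kernel `(t - s)₊ ^ (α - 1)` is singular. After the substitution `u = t - s` the
  integral is `∫₀¹ u ^ (α - 1) d̃ (t - u) du`, where `d̃` extends `d` by constants outside `[0,1]`;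
  `d 0 = 0` makes this correct. As `d̃` is Lipschitz and differentiable off `{0, 1}`, dominated
  convergence gives the derivative (`hasDerivWithinAt_integral_singular`).
* The remaining terms are constants times combinations of `t ^ (α + 1)` and `t ^ (α + 2)`. The
  constant involving the non-integrable weight `(1 - s) ^ (α - 2)` converges because `d 1 = 0`
  gives `|d s| ≤ (1 - s) sup |d'|`.

With `|(α + 1) (α + 2) (t ^ α - t ^ (α + 1))| ≤ 6` and
`|(α + 1) t ^ α - (α + 2) t ^ (α + 1)| ≤ 2`, the constants obtained are `18 w` and
`|γ| (6 sup |d| + 3 sup |d'|)`, which are below those of `ψ₂`.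
-/

open Set intervalIntegral

noncomputable def GreenG (α β : ℝ) (t s : ℝ) : ℝ :=
  (1 / Real.Gamma (α + β)) *
    ((if s ≤ t then (t - s) ^ (α + β - 1) else 0)
      + ((α + 1) * t ^ (α + 2) - (α + 2) * t ^ (α + 1)) * (1 - s) ^ (α + β - 1)
      + (α + β - 1) * (t ^ (α + 1) - t ^ (α + 2)) * (1 - s) ^ (α + β - 2))

noncomputable def GreenH (α γ : ℝ) (t s : ℝ) : ℝ :=
  (γ / Real.Gamma α) *
    (-(if s ≤ t then (t - s) ^ (α - 1) else 0)
      + ((α + 2) * t ^ (α + 1) - (α + 1) * t ^ (α + 2)) * (1 - s) ^ (α - 1)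
      + (α - 1) * (t ^ (α + 2) - t ^ (α + 1)) * (1 - s) ^ (α - 2))

open MeasureTheory Topology Filter Interval

/-! ### Power kernels on `[0,1]` -/

lemma intervalIntegrable_sub_rpow {p : ℝ} (hp : -1 < p) (t : ℝ) :
    IntervalIntegrable (fun s : ℝ => (t - s) ^ p) volume 0 1 := by
  have h := (intervalIntegral.intervalIntegrable_rpow' (a := t) (b := t - 1) hp).comp_sub_left t
  simpa using h

lemma intervalIntegrable_truncated_rpow {p : ℝ} (hp : -1 < p) (t : ℝ) :
    IntervalIntegrable (fun s : ℝ => if s ≤ t then (t - s) ^ p else 0) volume 0 1 := by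
  have h := intervalIntegrable_sub_rpow hp t
  rw [intervalIntegrable_iff] at h ⊢
  have h2 := h.indicator (measurableSet_Iic (a := t))
  refine h2.congr_fun (fun s _ => ?_) measurableSet_uIoc
  simp [Set.indicator_apply]

lemma integral_one_sub_rpow {p : ℝ} (hp : -1 < p) :
    ∫ s in (0:ℝ)..1, (1 - s) ^ p = 1 / (p + 1) := by
  rw [intervalIntegral.integral_comp_sub_left (fun s : ℝ => s ^ p) 1]
  rw [integral_rpow (Or.inl hp)]
  simp [Real.zero_rpow (by linarith : p + 1 ≠ 0)]

lemma abs_integral_le_of_abs_le_one_sub_rpow {p C : ℝ} (hp : -1 < p) {g : ℝ → ℝ}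
    (hg : ∀ s ∈ Ioc (0:ℝ) 1, |g s| ≤ C * (1 - s) ^ p) :
    |∫ s in (0:ℝ)..1, g s| ≤ C / (p + 1) := by
  have h := intervalIntegral.norm_integral_le_of_norm_le (μ := volume) (f := g)
    (g := fun s : ℝ => C * (1 - s) ^ p) zero_le_one (Eventually.of_forall hg)
    ((intervalIntegrable_sub_rpow hp 1).const_mul C)
  rw [intervalIntegral.integral_const_mul, integral_one_sub_rpow hp, Real.norm_eq_abs] at h
  rwa [div_eq_mul_one_div]

/-! ### The regular truncated kernel -/

/-- The positive part raised to a power `p > 1` is `C¹`; at the kink this follows from continuity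
of the candidate derivative. -/
lemma hasDerivAt_max_rpow {p : ℝ} (hp : 1 < p) (v : ℝ) :
    HasDerivAt (fun v : ℝ => (max v 0) ^ p) (p * (max v 0) ^ (p - 1)) v := by
  have hc : ∀ q : ℝ, 0 < q → Continuous fun v : ℝ => (max v 0) ^ q := fun q hq =>
    (continuous_id.max continuous_const).rpow_const fun _ => Or.inr hq.le
  refine hasDerivAt_of_hasDerivAt_of_ne' (x := 0) (f := fun v : ℝ => (max v 0) ^ p)
    (g := fun v : ℝ => p * (max v 0) ^ (p - 1)) (fun y hy => ?_) (hc p (by linarith)).continuousAt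
    ((hc (p - 1) (by linarith)).const_mul p).continuousAt v
  rcases lt_or_gt_of_ne hy with h | h
  · have h0 : HasDerivAt (fun _ : ℝ => (0:ℝ)) 0 y := hasDerivAt_const _ _
    convert h0.congr_of_eventuallyEq ?_ using 1
    · rw [max_eq_right h.le, Real.zero_rpow (by linarith), mul_zero]
    · filter_upwards [Iio_mem_nhds h] with z hz
      rw [max_eq_right (le_of_lt hz), Real.zero_rpow (by linarith)]
  · rw [max_eq_left h.le]
    refine (Real.hasDerivAt_rpow_const (Or.inl hy)).congr_of_eventuallyEq ?_
    filter_upwards [Ioi_mem_nhds h] with z hz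
    rw [max_eq_left (le_of_lt hz)]

lemma truncated_rpow_eq_max {p : ℝ} (hp : 0 < p) (t s : ℝ) :
    (if s ≤ t then (t - s) ^ p else 0) = (max (t - s) 0) ^ p := by
  split_ifs with h
  · rw [max_eq_left (by linarith)]
  · rw [max_eq_right (by linarith), Real.zero_rpow hp.ne']

/-- The bound on the derivative comes from `(t - s)₊ ≤ 1 - s` and `p ∫₀¹ (1 - s) ^ (p - 1) ds = 1`. -/
lemma hasDerivAt_integral_truncated_rpow {p : ℝ} (hp : 1 < p) {F : ℝ → ℝ}
    (hF : ContinuousOn F (Icc 0 1)) {M : ℝ} (hM : ∀ s ∈ Icc (0:ℝ) 1, |F s| ≤ M)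
    {t : ℝ} (ht : t ∈ Icc (0:ℝ) 1) :
    ∃ D, HasDerivAt (fun t => ∫ s in (0:ℝ)..1, (if s ≤ t then (t - s) ^ p else 0) * F s) D t ∧
      |D| ≤ M := by
  have hM0 : 0 ≤ M := (abs_nonneg _).trans (hM 0 (by simp))
  have hFm : AEStronglyMeasurable F (volume.restrict (Ι (0:ℝ) 1)) := by
    rw [uIoc_of_le zero_le_one]
    exact (hF.mono Ioc_subset_Icc_self).aestronglyMeasurable measurableSet_Ioc
  have hcont : ∀ q : ℝ, 0 < q → ∀ t : ℝ, Continuous fun s : ℝ => (max (t - s) 0) ^ q :=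
    fun q hq t => ((continuous_const.sub continuous_id).max continuous_const).rpow_const
      fun _ => Or.inr hq.le
  have hFi : ∀ s ∈ Ι (0:ℝ) 1, s ∈ Icc (0:ℝ) 1 := fun s hs => by
    rw [uIoc_of_le zero_le_one] at hs; exact Ioc_subset_Icc_self hs
  have key := intervalIntegral.hasDerivAt_integral_of_dominated_loc_of_deriv_le
    (μ := volume) (a := 0) (b := 1) (x₀ := t) (s := Iio 2)
    (F := fun t s => (max (t - s) 0) ^ p * F s)
    (F' := fun t s => p * (max (t - s) 0) ^ (p - 1) * F s)
    (bound := fun _ => p * 2 ^ (p - 1) * M)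
    (Iio_mem_nhds (by linarith [ht.2]))
    (Eventually.of_forall fun t => (hcont p (by linarith) t).aestronglyMeasurable.mul hFm)
    (((hcont p (by linarith) t).continuousOn.mul
      (by rwa [uIcc_of_le zero_le_one])).intervalIntegrable)
    (((hcont (p - 1) (by linarith) t).const_mul p).aestronglyMeasurable.mul hFm)
    (Eventually.of_forall fun s hs z hz => by
      have hz2 : z < 2 := hz
      have hs' := hFi s hs
      have h1 : (max (z - s) 0) ^ (p - 1) ≤ 2 ^ (p - 1) :=
        Real.rpow_le_rpow (le_max_right _ _) (max_le (by linarith [hs'.1]) (by norm_num))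
          (by linarith)
      have h0 : 0 ≤ (max (z - s) 0) ^ (p - 1) := Real.rpow_nonneg (le_max_right _ _) _
      rw [Real.norm_eq_abs, abs_mul, abs_of_nonneg (by positivity)]
      have := hM s hs'
      gcongr)
    intervalIntegrable_const
    (Eventually.of_forall fun s _ z _ => by
      have h := (hasDerivAt_max_rpow hp (z - s)).comp z ((hasDerivAt_id z).sub_const s)
      rw [mul_one] at h
      exact h.mul_const (F s))
  refine ⟨∫ s in (0:ℝ)..1, p * (max (t - s) 0) ^ (p - 1) * F s, ?_, ?_⟩
  · simpa only [truncated_rpow_eq_max (zero_lt_one.trans hp)] using key.2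
  · have := abs_integral_le_of_abs_le_one_sub_rpow (p := p - 1) (C := p * M)
      (g := fun s => p * (max (t - s) 0) ^ (p - 1) * F s) (by linarith) (fun s hs => by
        have h1 : (max (t - s) 0) ^ (p - 1) ≤ (1 - s) ^ (p - 1) :=
          Real.rpow_le_rpow (le_max_right _ _) (max_le (by linarith [ht.2]) (by linarith [hs.2]))
            (by linarith)
        have h0 : 0 ≤ (max (t - s) 0) ^ (p - 1) := Real.rpow_nonneg (le_max_right _ _) _
        rw [abs_mul, abs_of_nonneg (by positivity), mul_right_comm p M]
        have := hM s (Ioc_subset_Icc_self hs)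
        have h2 : 0 ≤ p * (1 - s) ^ (p - 1) := mul_nonneg (by linarith) (h0.trans h1)
        gcongr)
    rwa [sub_add_cancel, mul_div_cancel_left₀ _ (by linarith : p ≠ 0)] at this

/-! ### The singular truncated kernel -/

/-- `max 0 (min v 1)` is the projection of `v` onto `[0,1]`; composing with it extends a function
on `[0,1]` to the line by constants. -/
lemma clamp_mem (v : ℝ) : max 0 (min v 1) ∈ Icc (0:ℝ) 1 :=
  ⟨le_max_left _ _, max_le zero_le_one (min_le_right _ _)⟩

lemma clamp_of_mem {v : ℝ} (hv : v ∈ Icc (0:ℝ) 1) : max 0 (min v 1) = v := by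
  rw [min_eq_left hv.2, max_eq_right hv.1]

lemma abs_clamp_sub_le (u v : ℝ) : |max 0 (min u 1) - max 0 (min v 1)| ≤ |u - v| := by
  rw [max_comm 0, max_comm 0]
  refine (abs_max_sub_max_le_abs _ _ _).trans ?_
  simpa using abs_min_sub_min_le_max u 1 v 1

/-- Substitution `u = t - s`. The condition `x 0 = 0` makes the extension of `x` vanish for
`u > t`, so that the domain of integration no longer depends on `t`. -/
lemma integral_truncated_rpow_eq {a : ℝ} {x : ℝ → ℝ} (hx0 : x 0 = 0) {t : ℝ}
    (ht : t ∈ Icc (0:ℝ) 1) :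
    ∫ s in (0:ℝ)..1, (if s ≤ t then (t - s) ^ a else 0) * x s =
      ∫ u in (0:ℝ)..1, u ^ a * x (max 0 (min (t - u) 1)) := by
  have h1 : ∀ s : ℝ, (if s ≤ t then (t - s) ^ a else 0) * x s =
      indicator {s | s ≤ t} (fun s => (t - s) ^ a * x s) s := fun s => by
    by_cases h : s ≤ t <;> simp [h]
  have h2 : ∀ u : ℝ, u ^ a * x (max 0 (min (t - u) 1)) =
      indicator {s | s ≤ t} (fun u => u ^ a * x (max 0 (min (t - u) 1))) u := fun u => by
    by_cases h : u ≤ t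
    · simp [h]
    · have : min (t - u) 1 ≤ 0 := (min_le_left _ _).trans (by linarith)
      simp [h, max_eq_left this, hx0]
  simp only [h1]
  rw [intervalIntegral.integral_indicator ht, intervalIntegral.integral_congr (fun u _ => h2 u),
    intervalIntegral.integral_indicator ht]
  have h3 := intervalIntegral.integral_comp_sub_left (a := 0) (b := t)
    (fun s : ℝ => (t - s) ^ a * x s) t
  rw [sub_self, sub_zero] at h3
  rw [← h3]
  refine intervalIntegral.integral_congr fun u hu => ?_
  rw [uIcc_of_le ht.1] at hu
  have : t - u ∈ Icc (0:ℝ) 1 := ⟨by linarith [hu.2], by linarith [hu.1, ht.2]⟩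
  simp only [clamp_of_mem this, sub_sub_cancel]

lemma hasDerivAt_comp_clamp {x x' : ℝ → ℝ}
    (hx : ∀ t ∈ Icc (0:ℝ) 1, HasDerivWithinAt x (x' t) (Icc (0:ℝ) 1) t) {v : ℝ}
    (hv0 : v ≠ 0) (hv1 : v ≠ 1) :
    HasDerivAt (fun v => x (max 0 (min v 1)))
      (indicator (Ioo 0 1) (fun v => x' (max 0 (min v 1))) v) v := by
  rcases lt_or_gt_of_ne hv0 with h | h
  · rw [indicator_of_notMem (fun h' => by linarith [h'.1])]
    refine (hasDerivAt_const v (x 0)).congr_of_eventuallyEq ?_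
    filter_upwards [Iio_mem_nhds h] with z hz
    rw [max_eq_left ((min_le_left _ _).trans (le_of_lt hz))]
  rcases lt_or_gt_of_ne hv1 with h' | h'
  · have hm : v ∈ Icc (0:ℝ) 1 := ⟨h.le, h'.le⟩
    rw [indicator_of_mem (show v ∈ Ioo (0:ℝ) 1 from ⟨h, h'⟩), clamp_of_mem hm]
    refine ((hx v hm).hasDerivAt (Icc_mem_nhds h h')).congr_of_eventuallyEq ?_
    filter_upwards [Icc_mem_nhds h h'] with z hz
    rw [clamp_of_mem hz]
  · rw [indicator_of_notMem (fun h'' => by linarith [h''.2])]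
    refine (hasDerivAt_const v (x 1)).congr_of_eventuallyEq ?_
    filter_upwards [Ioi_mem_nhds h'] with z hz
    rw [min_eq_right (le_of_lt hz), max_eq_right zero_le_one]

/-- Fractional integrals of order `a + 1 > 0` of a `C¹` function vanishing at `0` are
differentiable, even when the kernel `(t - s) ^ a` is unbounded. -/
lemma hasDerivWithinAt_integral_singular {a : ℝ} (ha : -1 < a) {x x' : ℝ → ℝ}
    (hx : ∀ t ∈ Icc (0:ℝ) 1, HasDerivWithinAt x (x' t) (Icc (0:ℝ) 1) t)
    (hx'c : ContinuousOn x' (Icc 0 1)) (hx0 : x 0 = 0) {N : ℝ}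
    (hN : ∀ s ∈ Icc (0:ℝ) 1, |x' s| ≤ N) {t : ℝ} (ht : t ∈ Icc (0:ℝ) 1) :
    ∃ D, HasDerivWithinAt
      (fun t => ∫ s in (0:ℝ)..1, (if s ≤ t then (t - s) ^ a else 0) * x s) D (Icc 0 1) t ∧
      |D| ≤ N / (a + 1) := by
  have hN0 : 0 ≤ N := (abs_nonneg _).trans (hN 0 (by simp))
  have hxc : ContinuousOn x (Icc 0 1) := fun s hs => (hx s hs).continuousWithinAt
  have hcl : Continuous fun v : ℝ => max 0 (min v 1) :=
    continuous_const.max (continuous_id.min continuous_const)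
  have hX : Continuous fun v : ℝ => x (max 0 (min v 1)) := hxc.comp_continuous hcl clamp_mem
  have hX' : Continuous fun v : ℝ => x' (max 0 (min v 1)) := hx'c.comp_continuous hcl clamp_mem
  have hlip : ∀ u v : ℝ, |x (max 0 (min u 1)) - x (max 0 (min v 1))| ≤ N * |u - v| := fun u v =>
    ((convex_Icc (0:ℝ) 1).norm_image_sub_le_of_norm_hasDerivWithin_le hx hN (clamp_mem v)
      (clamp_mem u)).trans (mul_le_mul_of_nonneg_left (abs_clamp_sub_le u v) hN0)
  have hrpow := intervalIntegral.intervalIntegrable_rpow' (a := 0) (b := 1) ha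
  have hmeas : Measurable fun u : ℝ => u ^ a := measurable_id.pow_const a
  have key := intervalIntegral.hasDerivAt_integral_of_dominated_loc_of_lip
    (μ := volume) (a := 0) (b := 1) (x₀ := t) (s := univ)
    (F := fun t u => u ^ a * x (max 0 (min (t - u) 1)))
    (F' := fun u => u ^ a * indicator (Ioo 0 1) (fun v => x' (max 0 (min v 1))) (t - u))
    (bound := fun u => u ^ a * N) univ_mem
    (Eventually.of_forall fun t => hmeas.aestronglyMeasurable.mul
      (hX.comp (continuous_const.sub continuous_id)).aestronglyMeasurable)
    (hrpow.mul_continuousOn (hX.comp (continuous_const.sub continuous_id)).continuousOn)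
    (hmeas.mul ((hX'.measurable.indicator measurableSet_Ioo).comp
      (measurable_const.sub measurable_id))).aestronglyMeasurable
    (Eventually.of_forall fun u hu => by
      rw [uIoc_of_le zero_le_one] at hu
      have hu0 : 0 ≤ u ^ a := Real.rpow_nonneg hu.1.le _
      refine LipschitzOnWith.of_dist_le_mul fun z _ y _ => ?_
      rw [Real.coe_nnabs, abs_of_nonneg (by positivity), Real.dist_eq, Real.dist_eq, ← mul_sub,
        abs_mul, abs_of_nonneg hu0, mul_assoc]
      have := hlip (z - u) (y - u)
      rw [sub_sub_sub_cancel_right] at this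
      gcongr)
    (hrpow.mul_const N)
    (by
      -- The extension of `x` has kinks at `0` and `1` only, that is at `u = t` and `u = t - 1`.
      have h0 : ∀ᵐ u : ℝ, u ≠ t := by simp [ae_iff]
      have h1 : ∀ᵐ u : ℝ, u ≠ t - 1 := by simp [ae_iff]
      filter_upwards [h0, h1] with u hu0 hu1 _
      have h := (hasDerivAt_comp_clamp hx (v := t - u) (fun h => hu0 (by linarith))
        (fun h => hu1 (by linarith))).comp t ((hasDerivAt_id t).sub_const u)
      rw [mul_one] at h
      exact h.const_mul (u ^ a))
  refine ⟨_, key.2.hasDerivWithinAt.congr_of_mem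
    (fun z hz => integral_truncated_rpow_eq hx0 hz) ht, ?_⟩
  have h := intervalIntegral.norm_integral_le_of_norm_le (μ := volume)
    (f := fun u => u ^ a * indicator (Ioo 0 1) (fun v => x' (max 0 (min v 1))) (t - u))
    (g := fun u : ℝ => u ^ a * N) zero_le_one (Eventually.of_forall fun u hu => by
      have hu0 : 0 ≤ u ^ a := Real.rpow_nonneg hu.1.le _
      rw [norm_mul, Real.norm_of_nonneg hu0]
      refine mul_le_mul_of_nonneg_left ((norm_indicator_le_norm_self _ _).trans ?_) hu0
      exact hN _ (clamp_mem _))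
    (hrpow.mul_const N)
  rw [intervalIntegral.integral_mul_const, integral_rpow (Or.inl ha), Real.one_rpow,
    Real.zero_rpow (by linarith : a + 1 ≠ 0), sub_zero] at h
  rwa [div_mul_eq_mul_div, one_mul] at h

/-! ### The non-integrable weight at `s = 1` -/

/-- Vanishing of `d` at `1` improves the weight `(1 - s) ^ (a - 2)` by one power. At `s = 1` the
left side is `0` whatever value `rpow` takes there. -/
lemma abs_rpow_mul_le {a N : ℝ} {d : ℝ → ℝ} (hd1 : d 1 = 0)
    (hd : ∀ s ∈ Icc (0:ℝ) 1, |d s| ≤ N * (1 - s)) (hN0 : 0 ≤ N) :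
    ∀ s ∈ Ioc (0:ℝ) 1, |(1 - s) ^ (a - 2) * d s| ≤ N * (1 - s) ^ (a - 1) := by
  intro s hs
  rcases eq_or_lt_of_le hs.2 with rfl | h1
  · rw [hd1, mul_zero, abs_zero]
    exact mul_nonneg hN0 (Real.rpow_nonneg (by norm_num) _)
  have h : 0 < 1 - s := by linarith
  have e : (1 - s) ^ (a - 1) = (1 - s) ^ (a - 2) * (1 - s) := by
    rw [← Real.rpow_add_one h.ne']; ring_nf
  have h0 := Real.rpow_nonneg h.le (a - 2)
  rw [abs_mul, abs_of_nonneg h0, e]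
  nlinarith [mul_le_mul_of_nonneg_left (hd s (Ioc_subset_Icc_self hs)) h0]

lemma abs_le_mul_one_sub {d d' : ℝ → ℝ}
    (hd : ∀ t ∈ Icc (0:ℝ) 1, HasDerivWithinAt d (d' t) (Icc (0:ℝ) 1) t) (hd1 : d 1 = 0) {N : ℝ}
    (hN : ∀ s ∈ Icc (0:ℝ) 1, |d' s| ≤ N) : ∀ s ∈ Icc (0:ℝ) 1, |d s| ≤ N * (1 - s) := by
  intro s hs
  have h := (convex_Icc (0:ℝ) 1).norm_image_sub_le_of_norm_hasDerivWithin_le hd hN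
    (x := 1) (y := s) (by simp) hs
  rwa [hd1, sub_zero, Real.norm_eq_abs, Real.norm_eq_abs, abs_sub_comm,
    abs_of_nonneg (by linarith [hs.2] : 0 ≤ 1 - s)] at h

lemma intervalIntegrable_singular {a N : ℝ} (ha : 0 < a) {d : ℝ → ℝ}
    (hdc : ContinuousOn d (Icc 0 1)) (hd1 : d 1 = 0)
    (hd : ∀ s ∈ Icc (0:ℝ) 1, |d s| ≤ N * (1 - s)) (hN0 : 0 ≤ N) :
    IntervalIntegrable (fun s => (1 - s) ^ (a - 2) * d s) volume 0 1 := by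
  refine ((intervalIntegrable_sub_rpow (by linarith : -1 < a - 1) 1).const_mul N).mono_fun' ?_ ?_
  · rw [uIoc_of_le zero_le_one]
    exact ((measurable_const.sub measurable_id).pow_const _).aestronglyMeasurable.mul
      ((hdc.mono Ioc_subset_Icc_self).aestronglyMeasurable measurableSet_Ioc)
  · rw [uIoc_of_le zero_le_one]
    exact (ae_restrict_iff' measurableSet_Ioc).2
      (Eventually.of_forall (abs_rpow_mul_le hd1 hd hN0))

/-! ### Differentiating the two Green integrals -/

lemma hasDerivAt_coeff {α : ℝ} (hα0 : 0 < α) (a b t : ℝ) :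
    HasDerivAt (fun t : ℝ => a * t ^ (α + 1) + b * t ^ (α + 2))
      (a * ((α + 1) * t ^ α) + b * ((α + 2) * t ^ (α + 1))) t := by
  have h1 := Real.hasDerivAt_rpow_const (x := t) (p := α + 1) (Or.inr (by linarith))
  have h2 := Real.hasDerivAt_rpow_const (x := t) (p := α + 2) (Or.inr (by linarith))
  rw [show α + 1 - 1 = α by ring] at h1
  rw [show α + 2 - 1 = α + 1 by ring] at h2
  exact (h1.const_mul a).add (h2.const_mul b)

/-- Bounds for the derivatives of the coefficients `(α + 2) t ^ (α + 1) - (α + 1) t ^ (α + 2)` and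
`t ^ (α + 1) - t ^ (α + 2)` of the two kernels. -/
lemma abs_coeff_deriv_le {α t : ℝ} (hα0 : 0 < α) (hα1 : α ≤ 1) (ht : t ∈ Icc (0:ℝ) 1) :
    |(α + 1) * (α + 2) * (t ^ α - t ^ (α + 1))| ≤ 6 ∧
      |(α + 1) * t ^ α - (α + 2) * t ^ (α + 1)| ≤ 2 := by
  have e : t ^ (α + 1) = t ^ α * t := by
    rcases eq_or_lt_of_le ht.1 with rfl | h
    · rw [Real.zero_rpow (by linarith), mul_zero]
    · exact Real.rpow_add_one h.ne' _
  have h0 : 0 ≤ t ^ α := Real.rpow_nonneg ht.1 _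
  have h1 : t ^ α ≤ 1 := Real.rpow_le_one ht.1 ht.2 hα0.le
  obtain ⟨t0, t1⟩ := ht
  rw [e]
  generalize t ^ α = c at *
  have h2 : 0 ≤ c - c * t := by nlinarith
  have h3 : c - c * t ≤ 1 := by nlinarith
  have h4 : 0 ≤ c * t := by positivity
  have h5 : c * t ≤ 1 := by nlinarith
  constructor
  · rw [abs_of_nonneg (by positivity)]
    have : (α + 1) * (α + 2) ≤ 6 := by nlinarith
    nlinarith
  · rw [abs_le]
    constructor <;> nlinarith

lemma intervalIntegrable_mul_of_continuousOn {k F : ℝ → ℝ}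
    (hk : IntervalIntegrable k volume 0 1) (hF : ContinuousOn F (Icc 0 1)) :
    IntervalIntegrable (fun s => k s * F s) volume 0 1 :=
  hk.mul_continuousOn (by rwa [uIcc_of_le zero_le_one])

lemma integral_kernel {k₁ k₂ k₃ : ℝ → ℝ} (h₁ : IntervalIntegrable k₁ volume 0 1)
    (h₂ : IntervalIntegrable k₂ volume 0 1) (h₃ : IntervalIntegrable k₃ volume 0 1)
    (C b c e : ℝ) :
    IntervalIntegrable (fun s => C * (b * k₁ s + c * k₂ s + e * k₃ s)) volume 0 1 ∧
    ∫ s in (0:ℝ)..1, C * (b * k₁ s + c * k₂ s + e * k₃ s) =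
      C * (b * (∫ s in (0:ℝ)..1, k₁ s) + c * (∫ s in (0:ℝ)..1, k₂ s)
        + e * ∫ s in (0:ℝ)..1, k₃ s) := by
  have i₁ := h₁.const_mul b
  have i₂ := h₂.const_mul c
  have i₃ := h₃.const_mul e
  refine ⟨((i₁.add i₂).add i₃).const_mul C, ?_⟩
  rw [intervalIntegral.integral_const_mul, intervalIntegral.integral_add (i₁.add i₂) i₃,
    intervalIntegral.integral_add i₁ i₂]
  simp only [intervalIntegral.integral_const_mul]

lemma integral_GreenG {α β : ℝ} (hαβ : 2 < α + β) {F : ℝ → ℝ}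
    (hF : ContinuousOn F (Icc 0 1)) (t : ℝ) :
    IntervalIntegrable (fun s => GreenG α β t s * F s) volume 0 1 ∧
    ∫ s in (0:ℝ)..1, GreenG α β t s * F s =
      (1 / Real.Gamma (α + β)) *
        ((∫ s in (0:ℝ)..1, (if s ≤ t then (t - s) ^ (α + β - 1) else 0) * F s)
          + (-(α + 2) * t ^ (α + 1) + (α + 1) * t ^ (α + 2)) *
            (∫ s in (0:ℝ)..1, (1 - s) ^ (α + β - 1) * F s)
          + ((α + β - 1) * t ^ (α + 1) + -(α + β - 1) * t ^ (α + 2)) *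
            ∫ s in (0:ℝ)..1, (1 - s) ^ (α + β - 2) * F s) := by
  have h := integral_kernel
    (intervalIntegrable_mul_of_continuousOn
      (intervalIntegrable_truncated_rpow (by linarith : -1 < α + β - 1) t) hF)
    (intervalIntegrable_mul_of_continuousOn
      (intervalIntegrable_sub_rpow (by linarith : -1 < α + β - 1) 1) hF)
    (intervalIntegrable_mul_of_continuousOn
      (intervalIntegrable_sub_rpow (by linarith : -1 < α + β - 2) 1) hF)
    (1 / Real.Gamma (α + β)) 1 (-(α + 2) * t ^ (α + 1) + (α + 1) * t ^ (α + 2))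
    ((α + β - 1) * t ^ (α + 1) + -(α + β - 1) * t ^ (α + 2))
  have e : ∀ s, GreenG α β t s * F s = (1 / Real.Gamma (α + β)) *
      (1 * ((if s ≤ t then (t - s) ^ (α + β - 1) else 0) * F s)
        + (-(α + 2) * t ^ (α + 1) + (α + 1) * t ^ (α + 2)) * ((1 - s) ^ (α + β - 1) * F s)
        + ((α + β - 1) * t ^ (α + 1) + -(α + β - 1) * t ^ (α + 2)) *
          ((1 - s) ^ (α + β - 2) * F s)) := fun s => by
    unfold GreenG; ring
  simp only [e]
  exact ⟨h.1, by rw [h.2, one_mul]⟩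

lemma integral_GreenH {α γ N : ℝ} (hα0 : 0 < α) {d : ℝ → ℝ} (hdc : ContinuousOn d (Icc 0 1))
    (hd1 : d 1 = 0) (hd : ∀ s ∈ Icc (0:ℝ) 1, |d s| ≤ N * (1 - s)) (hN0 : 0 ≤ N) (t : ℝ) :
    IntervalIntegrable (fun s => GreenH α γ t s * d s) volume 0 1 ∧
    ∫ s in (0:ℝ)..1, GreenH α γ t s * d s =
      (γ / Real.Gamma α) *
        (-1 * (∫ s in (0:ℝ)..1, (if s ≤ t then (t - s) ^ (α - 1) else 0) * d s)
          + ((α + 2) * t ^ (α + 1) + -(α + 1) * t ^ (α + 2)) *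
            (∫ s in (0:ℝ)..1, (1 - s) ^ (α - 1) * d s)
          + (-(α - 1) * t ^ (α + 1) + (α - 1) * t ^ (α + 2)) *
            ∫ s in (0:ℝ)..1, (1 - s) ^ (α - 2) * d s) := by
  have h := integral_kernel
    (intervalIntegrable_mul_of_continuousOn
      (intervalIntegrable_truncated_rpow (by linarith : -1 < α - 1) t) hdc)
    (intervalIntegrable_mul_of_continuousOn
      (intervalIntegrable_sub_rpow (by linarith : -1 < α - 1) 1) hdc)
    (intervalIntegrable_singular hα0 hdc hd1 hd hN0)
    (γ / Real.Gamma α) (-1) ((α + 2) * t ^ (α + 1) + -(α + 1) * t ^ (α + 2))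
    (-(α - 1) * t ^ (α + 1) + (α - 1) * t ^ (α + 2))
  have e : ∀ s, GreenH α γ t s * d s = (γ / Real.Gamma α) *
      (-1 * ((if s ≤ t then (t - s) ^ (α - 1) else 0) * d s)
        + ((α + 2) * t ^ (α + 1) + -(α + 1) * t ^ (α + 2)) * ((1 - s) ^ (α - 1) * d s)
        + (-(α - 1) * t ^ (α + 1) + (α - 1) * t ^ (α + 2)) *
          ((1 - s) ^ (α - 2) * d s)) := fun s => by
    unfold GreenH; ring
  simp only [e]
  exact h

lemma hasDerivWithinAt_integral_GreenG {α β : ℝ} (hα0 : 0 < α) (hα1 : α ≤ 1)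
    (hβ2 : 2 < β) (hβ3 : β ≤ 3) {F : ℝ → ℝ} (hF : ContinuousOn F (Icc 0 1)) {M : ℝ}
    (hM : ∀ s ∈ Icc (0:ℝ) 1, |F s| ≤ M) {t : ℝ} (ht : t ∈ Icc (0:ℝ) 1) :
    ∃ D, HasDerivWithinAt (fun t => ∫ s in (0:ℝ)..1, GreenG α β t s * F s) D (Icc 0 1) t ∧
      |D| ≤ 18 * M / Real.Gamma (α + β + 1) := by
  have hM0 : 0 ≤ M := (abs_nonneg _).trans (hM 0 (by simp))
  obtain ⟨D₁, hD₁, hb₁⟩ :=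
    hasDerivAt_integral_truncated_rpow (p := α + β - 1) (by linarith) hF hM ht
  have hI : ∀ p : ℝ, -1 < p → |∫ s in (0:ℝ)..1, (1 - s) ^ p * F s| ≤ M / (p + 1) := fun p hp =>
    abs_integral_le_of_abs_le_one_sub_rpow hp fun s hs => by
      have h0 : 0 ≤ (1 - s) ^ p := Real.rpow_nonneg (by linarith [hs.2]) _
      rw [abs_mul, abs_of_nonneg h0, mul_comm]
      exact mul_le_mul_of_nonneg_right (hM s (Ioc_subset_Icc_self hs)) h0
  have hI₁ := hI (α + β - 1) (by linarith)
  have hI₂ := hI (α + β - 2) (by linarith)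
  rw [sub_add_cancel] at hI₁
  rw [show α + β - 2 + 1 = α + β - 1 by ring] at hI₂
  simp only [(integral_GreenG (by linarith : 2 < α + β) hF _).2]
  refine ⟨_, (((hD₁.add ((hasDerivAt_coeff hα0 _ _ t).mul_const _)).add
    ((hasDerivAt_coeff hα0 _ _ t).mul_const _)).const_mul _).hasDerivWithinAt, ?_⟩
  generalize (∫ s in (0:ℝ)..1, (1 - s) ^ (α + β - 1) * F s) = I₁ at *
  generalize (∫ s in (0:ℝ)..1, (1 - s) ^ (α + β - 2) * F s) = I₂ at *
  obtain ⟨hc, he⟩ := abs_coeff_deriv_le hα0 hα1 ht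
  have hs : 0 < α + β := by linarith
  have hs1 : 0 < α + β - 1 := by linarith
  have hΓ := Real.Gamma_pos_of_pos hs
  rw [Real.Gamma_add_one hs.ne']
  rw [abs_mul, abs_of_pos (by positivity), one_div, inv_mul_eq_div, ← div_div,
    div_le_div_iff_of_pos_right hΓ]
  rw [le_div_iff₀ hs] at hI₁ ⊢
  rw [le_div_iff₀ hs1] at hI₂
  have e : D₁ + (-(α + 2) * ((α + 1) * t ^ α) + (α + 1) * ((α + 2) * t ^ (α + 1))) * I₁ +
      ((α + β - 1) * ((α + 1) * t ^ α) + -(α + β - 1) * ((α + 2) * t ^ (α + 1))) * I₂ =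
      D₁ + -((α + 1) * (α + 2) * (t ^ α - t ^ (α + 1)) * I₁) +
      ((α + 1) * t ^ α - (α + 2) * t ^ (α + 1)) * ((α + β - 1) * I₂) := by ring
  rw [e]
  have h1 : |(α + 1) * (α + 2) * (t ^ α - t ^ (α + 1)) * I₁| * (α + β) ≤ 6 * M := by
    rw [abs_mul _ I₁, mul_assoc]
    exact mul_le_mul hc hI₁ (by positivity) (by norm_num)
  have h2 : |((α + 1) * t ^ α - (α + 2) * t ^ (α + 1)) * ((α + β - 1) * I₂)| ≤ 2 * M := by
    rw [abs_mul, abs_mul (α + β - 1), abs_of_pos hs1, mul_comm (α + β - 1)]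
    exact mul_le_mul he hI₂ (by positivity) (by norm_num)
  have h3 := abs_add_three D₁ (-((α + 1) * (α + 2) * (t ^ α - t ^ (α + 1)) * I₁))
    (((α + 1) * t ^ α - (α + 2) * t ^ (α + 1)) * ((α + β - 1) * I₂))
  rw [abs_neg] at h3
  have h4 := mul_le_mul_of_nonneg_right h3 hs.le
  -- `α + β ≤ 4`, so the three terms contribute `4 M`, `6 M` and `8 M`.
  have h5 : |D₁| * (α + β) ≤ M * 4 := mul_le_mul hb₁ (by linarith) hs.le hM0
  have h6 := mul_le_mul h2 (by linarith : α + β ≤ 4) hs.le (by positivity)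
  linarith

lemma hasDerivWithinAt_integral_GreenH {α : ℝ} (γ : ℝ) (hα0 : 0 < α) (hα1 : α ≤ 1)
    {d d' : ℝ → ℝ} (hd : ∀ t ∈ Icc (0:ℝ) 1, HasDerivWithinAt d (d' t) (Icc (0:ℝ) 1) t)
    (hd'c : ContinuousOn d' (Icc 0 1)) (hd0 : d 0 = 0) (hd1 : d 1 = 0) {K N : ℝ}
    (hK : ∀ s ∈ Icc (0:ℝ) 1, |d s| ≤ K) (hN : ∀ s ∈ Icc (0:ℝ) 1, |d' s| ≤ N)
    {t : ℝ} (ht : t ∈ Icc (0:ℝ) 1) :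
    ∃ D, HasDerivWithinAt (fun t => ∫ s in (0:ℝ)..1, GreenH α γ t s * d s) D (Icc 0 1) t ∧
      |D| ≤ |γ| * (6 * K + 3 * N) / Real.Gamma (α + 1) := by
  have hN0 : 0 ≤ N := (abs_nonneg _).trans (hN 0 (by simp))
  have hdc : ContinuousOn d (Icc 0 1) := fun s hs => (hd s hs).continuousWithinAt
  have hdN := abs_le_mul_one_sub hd hd1 hN
  obtain ⟨D₁, hD₁, hb₁⟩ :=
    hasDerivWithinAt_integral_singular (a := α - 1) (by linarith) hd hd'c hd0 hN ht
  have hI₁ : |∫ s in (0:ℝ)..1, (1 - s) ^ (α - 1) * d s| ≤ K / (α - 1 + 1) :=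
    abs_integral_le_of_abs_le_one_sub_rpow (by linarith) fun s hs => by
      have h0 : 0 ≤ (1 - s) ^ (α - 1) := Real.rpow_nonneg (by linarith [hs.2]) _
      rw [abs_mul, abs_of_nonneg h0, mul_comm]
      exact mul_le_mul_of_nonneg_right (hK s (Ioc_subset_Icc_self hs)) h0
  have hI₂ : |∫ s in (0:ℝ)..1, (1 - s) ^ (α - 2) * d s| ≤ N / (α - 1 + 1) :=
    abs_integral_le_of_abs_le_one_sub_rpow (by linarith) (abs_rpow_mul_le hd1 hdN hN0)
  rw [sub_add_cancel] at hI₁ hI₂ hb₁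
  simp only [(integral_GreenH (γ := γ) hα0 hdc hd1 hdN hN0 _).2]
  refine ⟨_, (((hD₁.const_mul (-1)).add
    ((hasDerivAt_coeff hα0 _ _ t).mul_const _).hasDerivWithinAt).add
    ((hasDerivAt_coeff hα0 _ _ t).mul_const _).hasDerivWithinAt).const_mul _, ?_⟩
  generalize (∫ s in (0:ℝ)..1, (1 - s) ^ (α - 1) * d s) = I₁ at *
  generalize (∫ s in (0:ℝ)..1, (1 - s) ^ (α - 2) * d s) = I₂ at *
  obtain ⟨hc, he⟩ := abs_coeff_deriv_le hα0 hα1 ht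
  have hΓ := Real.Gamma_pos_of_pos hα0
  rw [Real.Gamma_add_one hα0.ne', abs_mul, abs_div, abs_of_pos hΓ, mul_comm α, ← div_mul_div_comm]
  refine mul_le_mul_of_nonneg_left ?_ (by positivity)
  rw [le_div_iff₀ hα0] at *
  have e : -1 * D₁ + ((α + 2) * ((α + 1) * t ^ α) + -(α + 1) * ((α + 2) * t ^ (α + 1))) * I₁ +
      (-(α - 1) * ((α + 1) * t ^ α) + (α - 1) * ((α + 2) * t ^ (α + 1))) * I₂ =
      -D₁ + (α + 1) * (α + 2) * (t ^ α - t ^ (α + 1)) * I₁ +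
      ((α + 1) * t ^ α - (α + 2) * t ^ (α + 1)) * ((1 - α) * I₂) := by ring
  rw [e]
  have h1 : |(α + 1) * (α + 2) * (t ^ α - t ^ (α + 1)) * I₁| * α ≤ 6 * K := by
    rw [abs_mul _ I₁, mul_assoc]
    exact mul_le_mul hc hI₁ (by positivity) (by norm_num)
  have h2 : |((α + 1) * t ^ α - (α + 2) * t ^ (α + 1)) * ((1 - α) * I₂)| * α ≤ 2 * N := by
    rw [abs_mul, abs_mul (1 - α), abs_of_nonneg (by linarith : 0 ≤ 1 - α), mul_assoc]
    have : (1 - α) * |I₂| * α ≤ N := by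
      have h := mul_le_mul (by linarith : 1 - α ≤ 1) hI₂ (by positivity) zero_le_one
      linarith
    exact mul_le_mul he this (mul_nonneg (mul_nonneg (by linarith) (abs_nonneg _)) hα0.le)
      (by norm_num)
  have h3 := abs_add_three (-D₁) ((α + 1) * (α + 2) * (t ^ α - t ^ (α + 1)) * I₁)
    (((α + 1) * t ^ α - (α + 2) * t ^ (α + 1)) * ((1 - α) * I₂))
  rw [abs_neg] at h3
  have h4 := mul_le_mul_of_nonneg_right h3 hα0.le
  linarith

/-! ### The Lipschitz estimate -/

lemma exists_abs_le {g : ℝ → ℝ} (hg : ContinuousOn g (Icc 0 1)) :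
    ∃ M, ∀ s ∈ Icc (0:ℝ) 1, |g s| ≤ M :=
  isCompact_Icc.exists_bound_of_continuousOn hg

lemma abs_le_iSup_Icc {g : ℝ → ℝ} (hg : ContinuousOn g (Icc 0 1)) :
    ∀ s ∈ Icc (0:ℝ) 1, |g s| ≤ ⨆ t : Icc (0:ℝ) 1, |g t| := by
  intro s hs
  obtain ⟨M, hM⟩ := exists_abs_le hg
  exact le_ciSup (f := fun t : Icc (0:ℝ) 1 => |g t|)
    ⟨M, by rintro _ ⟨t, rfl⟩; exact hM t t.2⟩ ⟨s, hs⟩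

/-- The derivative estimate for the linear operator that sends `(F, d)` to
`t ↦ ∫ G(t,s) F(s) ds + ∫ H(t,s) d(s) ds`. -/
lemma exists_hasDerivWithinAt_operator {α β : ℝ} (γ : ℝ) (hα0 : 0 < α) (hα1 : α ≤ 1)
    (hβ2 : 2 < β) (hβ3 : β ≤ 3) {F : ℝ → ℝ} (hF : ContinuousOn F (Icc 0 1))
    {d d' : ℝ → ℝ} (hd : ∀ t ∈ Icc (0:ℝ) 1, HasDerivWithinAt d (d' t) (Icc (0:ℝ) 1) t)
    (hd'c : ContinuousOn d' (Icc 0 1)) (hd0 : d 0 = 0) (hd1 : d 1 = 0) {M K N : ℝ}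
    (hM : ∀ s ∈ Icc (0:ℝ) 1, |F s| ≤ M)
    (hK : ∀ s ∈ Icc (0:ℝ) 1, |d s| ≤ K) (hN : ∀ s ∈ Icc (0:ℝ) 1, |d' s| ≤ N)
    {t : ℝ} (ht : t ∈ Icc (0:ℝ) 1) :
    ∃ D, HasDerivWithinAt (fun t => (∫ s in (0:ℝ)..1, GreenG α β t s * F s)
        + ∫ s in (0:ℝ)..1, GreenH α γ t s * d s) D (Icc 0 1) t ∧
      |D| ≤ 18 * M / Real.Gamma (α + β + 1) + |γ| * (6 * K + 3 * N) / Real.Gamma (α + 1) := by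
  obtain ⟨D₁, h₁, b₁⟩ := hasDerivWithinAt_integral_GreenG hα0 hα1 hβ2 hβ3 hF hM ht
  obtain ⟨D₂, h₂, b₂⟩ := hasDerivWithinAt_integral_GreenH γ hα0 hα1 hd hd'c hd0 hd1 hK hN ht
  exact ⟨D₁ + D₂, h₁.add h₂, (abs_add_le _ _).trans (add_le_add b₁ b₂)⟩

theorem lipschitz_deriv_estimate (α β γ : ℝ) (hα0 : 0 < α) (hα1 : α ≤ 1)
    (hβ2 : 2 < β) (hβ3 : β ≤ 3) (f : ℝ → ℝ → ℝ → ℝ)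
    (hf : ContinuousOn (fun p : ℝ × ℝ × ℝ => f p.1 p.2.1 p.2.2)
      (Set.Icc 0 1 ×ˢ (Set.univ : Set (ℝ × ℝ))))
    (w : ℝ) (hw : 0 < w)
    (hlip : ∀ t ∈ Set.Icc (0:ℝ) 1, ∀ p q u v : ℝ,
      |f t p q - f t u v| ≤ w * (|p - u| + |q - v|))
    (ψ₂ : ℝ)
    (hψ₂ : ψ₂ = 36 * w / Real.Gamma (α + β + 1) + 18 * |γ| / Real.Gamma (α + 1))
    (x x' y y' : ℝ → ℝ)
    (hx : ∀ t ∈ Set.Icc (0:ℝ) 1, HasDerivWithinAt x (x' t) (Set.Icc (0:ℝ) 1) t)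
    (hx'c : ContinuousOn x' (Set.Icc 0 1)) (hx0 : x 0 = 0) (hx1 : x 1 = 0)
    (hy : ∀ t ∈ Set.Icc (0:ℝ) 1, HasDerivWithinAt y (y' t) (Set.Icc (0:ℝ) 1) t)
    (hy'c : ContinuousOn y' (Set.Icc 0 1)) (hy0 : y 0 = 0) (hy1 : y 1 = 0) :
    ∃ Zx' Zy' : ℝ → ℝ,
      (∀ t ∈ Set.Icc (0:ℝ) 1,
        HasDerivWithinAt
          (fun t => (∫ s in (0:ℝ)..1, GreenG α β t s * f s (x s) (x' s))
            + ∫ s in (0:ℝ)..1, GreenH α γ t s * x s)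
          (Zx' t) (Set.Icc (0:ℝ) 1) t) ∧
      (∀ t ∈ Set.Icc (0:ℝ) 1,
        HasDerivWithinAt
          (fun t => (∫ s in (0:ℝ)..1, GreenG α β t s * f s (y s) (y' s))
            + ∫ s in (0:ℝ)..1, GreenH α γ t s * y s)
          (Zy' t) (Set.Icc (0:ℝ) 1) t) ∧
      ∀ t ∈ Set.Icc (0:ℝ) 1,
        |Zx' t - Zy' t|
          ≤ ψ₂ * ((⨆ t : Set.Icc (0:ℝ) 1, |x t - y t|)
              + ⨆ t : Set.Icc (0:ℝ) 1, |x' t - y' t|) := by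
  have hxc : ContinuousOn x (Icc 0 1) := fun s hs => (hx s hs).continuousWithinAt
  have hyc : ContinuousOn y (Icc 0 1) := fun s hs => (hy s hs).continuousWithinAt
  have hFx : ContinuousOn (fun s => f s (x s) (x' s)) (Icc 0 1) :=
    hf.comp (continuousOn_id.prodMk (hxc.prodMk hx'c)) fun s hs => ⟨hs, mem_univ _⟩
  have hFy : ContinuousOn (fun s => f s (y s) (y' s)) (Icc 0 1) :=
    hf.comp (continuousOn_id.prodMk (hyc.prodMk hy'c)) fun s hs => ⟨hs, mem_univ _⟩
  obtain ⟨Mx, hMx⟩ := exists_abs_le hFx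
  obtain ⟨My, hMy⟩ := exists_abs_le hFy
  obtain ⟨Kx, hKx⟩ := exists_abs_le hxc
  obtain ⟨Ky, hKy⟩ := exists_abs_le hyc
  obtain ⟨Nx, hNx⟩ := exists_abs_le hx'c
  obtain ⟨Ny, hNy⟩ := exists_abs_le hy'c
  have hNx0 : 0 ≤ Nx := (abs_nonneg _).trans (hNx 0 (by simp))
  have hNy0 : 0 ≤ Ny := (abs_nonneg _).trans (hNy 0 (by simp))
  have hZx := fun t (ht : t ∈ Icc (0:ℝ) 1) => exists_hasDerivWithinAt_operator γ hα0 hα1 hβ2 hβ3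
    hFx hx hx'c hx0 hx1 hMx hKx hNx ht
  have hZy := fun t (ht : t ∈ Icc (0:ℝ) 1) => exists_hasDerivWithinAt_operator γ hα0 hα1 hβ2 hβ3
    hFy hy hy'c hy0 hy1 hMy hKy hNy ht
  choose! Zx' hZx' _ using hZx
  choose! Zy' hZy' _ using hZy
  refine ⟨Zx', Zy', hZx', hZy', fun t ht => ?_⟩
  have hK := abs_le_iSup_Icc (hxc.sub hyc)
  have hN := abs_le_iSup_Icc (hx'c.sub hy'c)
  simp only [Pi.sub_apply] at hK hN
  set K := ⨆ t : Icc (0:ℝ) 1, |x t - y t|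
  set N := ⨆ t : Icc (0:ℝ) 1, |x' t - y' t|
  have hK0 : 0 ≤ K := (abs_nonneg _).trans (hK 0 (by simp))
  have hN0 : 0 ≤ N := (abs_nonneg _).trans (hN 0 (by simp))
  obtain ⟨D, hD, hDb⟩ := exists_hasDerivWithinAt_operator γ hα0 hα1 hβ2 hβ3
    (F := fun s => f s (x s) (x' s) - f s (y s) (y' s)) (d := fun s => x s - y s)
    (d' := fun s => x' s - y' s) (hFx.sub hFy)
    (fun s hs => (hx s hs).sub (hy s hs)) (hx'c.sub hy'c) (by simp [hx0, hy0])
    (by simp [hx1, hy1]) (M := w * (K + N))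
    (fun s hs => (hlip s hs _ _ _ _).trans
      (mul_le_mul_of_nonneg_left (add_le_add (hK s hs) (hN s hs)) hw.le)) hK hN ht
  have hG : ∀ z, ∫ s in (0:ℝ)..1, GreenG α β z s * (f s (x s) (x' s) - f s (y s) (y' s)) =
      (∫ s in (0:ℝ)..1, GreenG α β z s * f s (x s) (x' s)) -
        ∫ s in (0:ℝ)..1, GreenG α β z s * f s (y s) (y' s) := fun z => by
    rw [← intervalIntegral.integral_sub (integral_GreenG (by linarith) hFx z).1
      (integral_GreenG (by linarith) hFy z).1]
    simp only [mul_sub]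
  have hH : ∀ z, ∫ s in (0:ℝ)..1, GreenH α γ z s * (x s - y s) =
      (∫ s in (0:ℝ)..1, GreenH α γ z s * x s) - ∫ s in (0:ℝ)..1, GreenH α γ z s * y s := fun z => by
    rw [← intervalIntegral.integral_sub
      (integral_GreenH hα0 hxc hx1 (abs_le_mul_one_sub hx hx1 hNx) hNx0 z).1
      (integral_GreenH hα0 hyc hy1 (abs_le_mul_one_sub hy hy1 hNy) hNy0 z).1]
    simp only [mul_sub]
  have hsub := (hZx' t ht).sub (hZy' t ht)
  have hDeq : Zx' t - Zy' t = D := by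
    refine (uniqueDiffOn_Icc_zero_one t ht).eq_deriv _ hsub (hD.congr_of_mem (fun z _ => ?_) ht)
    simp only [hG, hH, Pi.sub_apply]
    ring
  rw [hDeq, hψ₂]
  refine hDb.trans ?_
  have hΓ₁ := Real.Gamma_pos_of_pos (by linarith : 0 < α + β + 1)
  have hΓ₂ := Real.Gamma_pos_of_pos (by linarith : 0 < α + 1)
  rw [add_mul, div_mul_eq_mul_div, div_mul_eq_mul_div]
  have hwKN : 0 ≤ w * (K + N) := by positivity
  refine add_le_add (div_le_div_of_nonneg_right (by linarith) hΓ₁.le)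
    (div_le_div_of_nonneg_right ?_ hΓ₂.le)
  nlinarith [mul_nonneg (abs_nonneg γ) hK0, mul_nonneg (abs_nonneg γ) hN0]
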